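/- Fix n ∈ ℕ with n ≥ 2 and c ∈ ℝ. For every ρ ∈ (0,1), the function ρ ↦ H_n(ρ,c) is twice differentiable at ρ, and its second derivative equals ∫_ℝ n·Φ(d)^{n−2}·φ(d)·[ ((n−1)φ(d) − d·Φ(d))·G(ρ,c,z)² + Φ(d)·G(ρ,c,z)·(4ρ−1)/(2ρ(1−ρ)) + c·Φ(d)/(4ρ(1−ρ)^{3/2}) ]·φ(z) dz, where d = d(ρ,c,z) and G(ρ,c,z) = (c + z/√ρ)/(2(1−ρ)^{3/2}). -/

import Mathlib

open MeasureTheory Filter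

/-- The standard normal density. -/
noncomputable def phi (x : ℝ) : ℝ := (Real.sqrt (2 * Real.pi))⁻¹ * Real.exp (-x ^ 2 / 2)

/-- The standard normal cumulative distribution function. -/
noncomputable def Phi (x : ℝ) : ℝ := ∫ t in Set.Iic x, phi t

/-- d(ρ,c,z) = (c + √ρ·z)/√(1−ρ). -/
noncomputable def dd (ρ c z : ℝ) : ℝ := (c + Real.sqrt ρ * z) / Real.sqrt (1 - ρ)

/-- G(ρ,c,z) = (c + z/√ρ)/(2(1−ρ)^{3/2}). -/
noncomputable def G (ρ c z : ℝ) : ℝ :=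
  (c + z / Real.sqrt ρ) / (2 * (1 - ρ) ^ ((3 : ℝ) / 2))

/-- H_n(ρ,c) = ∫ Φ(d(ρ,c,z))^n φ(z) dz. -/
noncomputable def Hn (n : ℕ) (ρ c : ℝ) : ℝ := ∫ z : ℝ, (Phi (dd ρ c z)) ^ n * phi z

/-!
Write `H_n(ρ, c) = 𝔼 Φ(d(ρ, c, Z)) ^ n` with `Z` standard normal, and differentiate twice under the
expectation by dominated convergence. The function `Φ ^ n` has bounded derivatives of order at
most two, while `∂d/∂ρ = G` and `∂²d/∂ρ²` are affine in `z` with coefficients continuous in `ρ`,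
hence grow at most linearly in `z`, locally uniformly in `ρ`. So the second moment of `Z` dominates
everything. The integrand is `(Φ ^ n)''(d) G² + (Φ ^ n)'(d) ∂G/∂ρ`.
-/

open ProbabilityTheory Topology

section DifferentiationUnderIntegral

variable {Ω : Type*} [MeasurableSpace Ω] {μ : Measure Ω} {f f' f'' : ℝ → ℝ}
  {u u' u'' w w' : ℝ → Ω → ℝ} {b₁ b₂ : Ω → ℝ} {K K' K'' ρ : ℝ}

theorem hasDerivAt_integral_comp_mul
    (hf : ∀ x, HasDerivAt f (f' x) x) (hf'_cont : Continuous f')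
    (hf_le : ∀ x, |f x| ≤ K) (hf'_le : ∀ x, |f' x| ≤ K')
    (hu_meas : ∀ r, AEStronglyMeasurable (u r) μ) (hu'_meas : AEStronglyMeasurable (u' ρ) μ)
    (hw_meas : ∀ r, AEStronglyMeasurable (w r) μ) (hw'_meas : AEStronglyMeasurable (w' ρ) μ)
    (hu : ∀ᶠ r in 𝓝 ρ, ∀ z, HasDerivAt (u · z) (u' r z) r)
    (hw : ∀ᶠ r in 𝓝 ρ, ∀ z, HasDerivAt (w · z) (w' r z) r)
    (hw_int : Integrable (w ρ) μ)
    (hb₁ : Integrable b₁ μ) (hu'w_le : ∀ᶠ r in 𝓝 ρ, ∀ z, |u' r z * w r z| ≤ b₁ z)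
    (hb₂ : Integrable b₂ μ) (hw'_le : ∀ᶠ r in 𝓝 ρ, ∀ z, |w' r z| ≤ b₂ z) :
    HasDerivAt (fun r => ∫ z, f (u r z) * w r z ∂μ)
      (∫ z, (f' (u ρ z) * (u' ρ z * w ρ z) + f (u ρ z) * w' ρ z) ∂μ) ρ := by
  have hf_cont : Continuous f := continuous_iff_continuousAt.2 fun x => (hf x).continuousAt
  have hfu_meas (r : ℝ) : AEStronglyMeasurable (fun z => f (u r z)) μ :=
    hf_cont.comp_aestronglyMeasurable (hu_meas r)
  have hf'u_meas : AEStronglyMeasurable (fun z => f' (u ρ z)) μ :=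
    hf'_cont.comp_aestronglyMeasurable (hu_meas ρ)
  have hK : 0 ≤ K := (abs_nonneg _).trans (hf_le 0)
  have hK' : 0 ≤ K' := (abs_nonneg _).trans (hf'_le 0)
  refine (hasDerivAt_integral_of_dominated_loc_of_deriv_le
    (F' := fun r z => f' (u r z) * (u' r z * w r z) + f (u r z) * w' r z)
    (bound := fun z => K' * b₁ z + K * b₂ z)
    ((hu.and hw).and (hu'w_le.and hw'_le))
    (.of_forall fun r => (hfu_meas r).mul (hw_meas r))
    (hw_int.bdd_mul (hfu_meas ρ) (.of_forall fun z => hf_le _))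
    ((hf'u_meas.mul (hu'_meas.mul (hw_meas ρ))).add ((hfu_meas ρ).mul hw'_meas))
    (.of_forall fun z r hr => ?_) ((hb₁.const_mul K').add (hb₂.const_mul K))
    (.of_forall fun z r hr => ?_)).2
  · obtain ⟨-, hu'w_le, hw'_le⟩ := hr
    refine (norm_add_le _ _).trans ?_
    simp only [norm_mul (f' _), norm_mul (f _), Real.norm_eq_abs]
    gcongr
    exacts [hf'_le _, hu'w_le z, hf_le _, hw'_le z]
  · obtain ⟨⟨hu, hw⟩, -⟩ := hr
    exact (((hf _).comp r (hu z)).mul (hw z)).congr_deriv (by rw [Function.comp_apply]; ring)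

theorem hasDerivAt_integral_comp [IsFiniteMeasure μ]
    (hf : ∀ x, HasDerivAt f (f' x) x) (hf'_cont : Continuous f')
    (hf_le : ∀ x, |f x| ≤ K) (hf'_le : ∀ x, |f' x| ≤ K')
    (hu_meas : ∀ r, AEStronglyMeasurable (u r) μ) (hu'_meas : AEStronglyMeasurable (u' ρ) μ)
    (hu : ∀ᶠ r in 𝓝 ρ, ∀ z, HasDerivAt (u · z) (u' r z) r)
    (hb₁ : Integrable b₁ μ) (hu'_le : ∀ᶠ r in 𝓝 ρ, ∀ z, |u' r z| ≤ b₁ z) :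
    HasDerivAt (fun r => ∫ z, f (u r z) ∂μ) (∫ z, f' (u ρ z) * u' ρ z ∂μ) ρ := by
  simpa using hasDerivAt_integral_comp_mul (w := fun _ _ => 1) (w' := fun _ _ => 0)
    (b₂ := fun _ => 0) hf hf'_cont hf_le hf'_le hu_meas hu'_meas
    (fun _ => aestronglyMeasurable_const) aestronglyMeasurable_const hu
    (.of_forall fun r _ => hasDerivAt_const r 1) (integrable_const 1) hb₁ (by simpa using hu'_le)
    (integrable_const 0) (by simp)

theorem hasDerivAt_deriv_integral_comp [IsFiniteMeasure μ]
    (hf : ∀ x, HasDerivAt f (f' x) x) (hf' : ∀ x, HasDerivAt f' (f'' x) x)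
    (hf''_cont : Continuous f'')
    (hf_le : ∀ x, |f x| ≤ K) (hf'_le : ∀ x, |f' x| ≤ K') (hf''_le : ∀ x, |f'' x| ≤ K'')
    (hu_meas : ∀ r, AEStronglyMeasurable (u r) μ) (hu'_meas : ∀ r, AEStronglyMeasurable (u' r) μ)
    (hu''_meas : AEStronglyMeasurable (u'' ρ) μ)
    (hu : ∀ᶠ r in 𝓝 ρ, ∀ z, HasDerivAt (u · z) (u' r z) r)
    (hu' : ∀ᶠ r in 𝓝 ρ, ∀ z, HasDerivAt (u' · z) (u'' r z) r)
    (hb₁ : MemLp b₁ 2 μ) (hu'_le : ∀ᶠ r in 𝓝 ρ, ∀ z, |u' r z| ≤ b₁ z)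
    (hb₂ : Integrable b₂ μ) (hu''_le : ∀ᶠ r in 𝓝 ρ, ∀ z, |u'' r z| ≤ b₂ z) :
    HasDerivAt (deriv fun r => ∫ z, f (u r z) ∂μ)
      (∫ z, (f'' (u ρ z) * u' ρ z ^ 2 + f' (u ρ z) * u'' ρ z) ∂μ) ρ := by
  have hb₁_int : Integrable b₁ μ := hb₁.integrable one_le_two
  have hf'_cont : Continuous f' := continuous_iff_continuousAt.2 fun x => (hf' x).continuousAt
  have hderiv : ∀ᶠ r in 𝓝 ρ,
      deriv (fun r => ∫ z, f (u r z) ∂μ) r = ∫ z, f' (u r z) * u' r z ∂μ := by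
    filter_upwards [hu.eventually_nhds, hu'_le.eventually_nhds] with r hur hu'r_le
    exact (hasDerivAt_integral_comp hf hf'_cont hf_le hf'_le hu_meas (hu'_meas r) hur
      hb₁_int hu'r_le).deriv
  have hu'_int : Integrable (u' ρ) μ :=
    hb₁_int.mono' (hu'_meas ρ) (.of_forall hu'_le.self_of_nhds)
  have hu'_sq_le : ∀ᶠ r in 𝓝 ρ, ∀ z, |u' r z * u' r z| ≤ b₁ z ^ 2 := by
    filter_upwards [hu'_le] with r hr z
    rw [← sq, abs_pow]
    exact pow_le_pow_left₀ (abs_nonneg _) (hr z) 2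
  simpa only [sq] using (hasDerivAt_integral_comp_mul hf' hf''_cont hf'_le hf''_le hu_meas
    (hu'_meas ρ) hu'_meas hu''_meas hu hu' hu'_int hb₁.integrable_sq hu'_sq_le hb₂
    hu''_le).congr_of_eventuallyEq hderiv

end DifferentiationUnderIntegral

theorem exists_eventually_abs_le_of_affine {X : Type*} [TopologicalSpace X] {x₀ : X}
    {g : X → ℝ → ℝ} (hg_affine : ∀ x z, g x z = g x 0 + (g x 1 - g x 0) * z)
    (hg_cont : ∀ z, ContinuousAt (g · z) x₀) :
    ∃ K, ∀ᶠ x in 𝓝 x₀, ∀ z, |g x z| ≤ K * (1 + |z|) := by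
  set K := |g x₀ 0| + |g x₀ 1 - g x₀ 0| + 1
  have hcont : ContinuousAt (fun x => |g x 0| + |g x 1 - g x 0|) x₀ :=
    (hg_cont 0).abs.add ((hg_cont 1).sub (hg_cont 0)).abs
  refine ⟨K, (hcont.eventually_lt_const (lt_add_one _)).mono fun x hx z => ?_⟩
  calc |g x z| ≤ |g x 0| + |g x 1 - g x 0| * |z| := by
        rw [hg_affine x z, ← abs_mul]
        exact abs_add_le _ _
    _ ≤ K * 1 + K * |z| := by
        gcongr
        · linarith [abs_nonneg (g x 1 - g x 0)]
        · linarith [abs_nonneg (g x 0)]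
    _ = K * (1 + |z|) := by ring

theorem hasDerivAt_integral_Iic {E : Type*} [NormedAddCommGroup E] [NormedSpace ℝ E]
    [CompleteSpace E] {f : ℝ → E} (hf_int : Integrable f) (hf : Continuous f) (x : ℝ) :
    HasDerivAt (fun y => ∫ t in Set.Iic y, f t) (f x) x := by
  have hsplit (y : ℝ) :
      ∫ t in Set.Iic y, f t = (∫ t in Set.Iic 0, f t) + ∫ t in (0 : ℝ)..y, f t := by
    rw [← intervalIntegral.integral_Iic_sub_Iic hf_int.integrableOn hf_int.integrableOn,
      add_sub_cancel]
  rw [funext hsplit]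
  exact (hf.integral_hasStrictDerivAt 0 x).hasDerivAt.const_add _

section StandardNormal

theorem phi_nonneg (x : ℝ) : 0 ≤ phi x := by
  unfold phi
  positivity

theorem phi_eq_gaussianPDFReal : phi = gaussianPDFReal 0 1 := by
  ext x
  simp [phi, gaussianPDFReal]

theorem integral_gaussianReal_zero_one (g : ℝ → ℝ) :
    ∫ z, g z ∂gaussianReal 0 1 = ∫ z, g z * phi z := by
  simp only [integral_gaussianReal_eq_integral_smul one_ne_zero, ← phi_eq_gaussianPDFReal,
    smul_eq_mul, mul_comm]

theorem Phi_eq_cdf (x : ℝ) : Phi x = cdf (gaussianReal 0 1) x := by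
  rw [cdf_eq_real, measureReal_def, gaussianReal_apply_eq_integral 0 one_ne_zero,
    ← phi_eq_gaussianPDFReal, ENNReal.toReal_ofReal, Phi]
  exact integral_nonneg phi_nonneg

theorem Phi_nonneg (x : ℝ) : 0 ≤ Phi x :=
  Phi_eq_cdf x ▸ cdf_nonneg _ x

theorem Phi_le_one (x : ℝ) : Phi x ≤ 1 :=
  Phi_eq_cdf x ▸ cdf_le_one _ x

theorem phi_le_exp (x : ℝ) : phi x ≤ Real.exp (-x ^ 2 / 2) := by
  refine mul_le_of_le_one_left (Real.exp_pos _).le (inv_le_one_of_one_le₀ ?_)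
  rw [Real.one_le_sqrt]
  linarith [Real.pi_gt_three]

theorem phi_le_one (x : ℝ) : phi x ≤ 1 :=
  (phi_le_exp x).trans (Real.exp_le_one_iff.2 (by linarith [sq_nonneg x]))

theorem abs_mul_phi_le_one (x : ℝ) : |x| * phi x ≤ 1 := by
  have habs_le : |x| ≤ Real.exp (x ^ 2 / 2) := by
    nlinarith [Real.add_one_le_exp (x ^ 2 / 2), sq_nonneg (|x| - 1), sq_abs x]
  calc |x| * phi x ≤ Real.exp (x ^ 2 / 2) * Real.exp (-x ^ 2 / 2) := by
        gcongr
        exacts [phi_nonneg x, phi_le_exp x]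
    _ = 1 := by rw [← Real.exp_add, ← add_div, add_neg_cancel, zero_div, Real.exp_zero]

theorem hasDerivAt_phi (x : ℝ) : HasDerivAt phi (-x * phi x) x := by
  have hexponent : HasDerivAt (fun x : ℝ => -x ^ 2 / 2) (-x) x :=
    ((hasDerivAt_pow 2 x).neg.div_const 2).congr_deriv (by push_cast; ring)
  exact (hexponent.exp.const_mul _).congr_deriv (by unfold phi; ring)

@[fun_prop]
theorem continuous_phi : Continuous phi := by
  unfold phi
  fun_prop

theorem hasDerivAt_Phi (x : ℝ) : HasDerivAt Phi (phi x) x :=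
  hasDerivAt_integral_Iic (phi_eq_gaussianPDFReal ▸ integrable_gaussianPDFReal 0 1)
    continuous_phi x

@[fun_prop]
theorem continuous_Phi : Continuous Phi :=
  continuous_iff_continuousAt.2 fun x => (hasDerivAt_Phi x).continuousAt

end StandardNormal

section PhiPow

theorem abs_Phi_pow_le_one (n : ℕ) (x : ℝ) : |Phi x ^ n| ≤ 1 := by
  rw [abs_of_nonneg (pow_nonneg (Phi_nonneg x) n)]
  exact pow_le_one₀ (Phi_nonneg x) (Phi_le_one x)

theorem hasDerivAt_Phi_pow (n : ℕ) (x : ℝ) :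
    HasDerivAt (fun x => Phi x ^ n) (n * Phi x ^ (n - 1) * phi x) x :=
  (hasDerivAt_Phi x).fun_pow n

theorem abs_deriv_Phi_pow_le (n : ℕ) (x : ℝ) : |n * Phi x ^ (n - 1) * phi x| ≤ n := by
  rw [abs_mul, abs_mul, Nat.abs_cast, abs_of_nonneg (phi_nonneg x)]
  calc n * |Phi x ^ (n - 1)| * phi x ≤ n * 1 * 1 := by
        gcongr
        exacts [phi_nonneg x, abs_Phi_pow_le_one _ x, phi_le_one x]
    _ = n := by ring

theorem hasDerivAt_deriv_Phi_pow {n : ℕ} (hn : 2 ≤ n) (x : ℝ) :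
    HasDerivAt (fun x => n * Phi x ^ (n - 1) * phi x)
      (n * Phi x ^ (n - 2) * phi x * ((n - 1) * phi x - x * Phi x)) x := by
  refine (((hasDerivAt_Phi_pow (n - 1) x).const_mul (n : ℝ)).fun_mul
    (hasDerivAt_phi x)).congr_deriv ?_
  obtain ⟨m, rfl⟩ := Nat.exists_eq_add_of_le' hn
  simp only [Nat.add_sub_cancel, show m + 2 - 1 = m + 1 from rfl]
  push_cast
  ring

theorem continuous_deriv_deriv_Phi_pow (n : ℕ) :
    Continuous fun x => n * Phi x ^ (n - 2) * phi x * ((n - 1) * phi x - x * Phi x) := by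
  fun_prop

theorem abs_deriv_deriv_Phi_pow_le (n : ℕ) (x : ℝ) :
    |n * Phi x ^ (n - 2) * phi x * ((n - 1) * phi x - x * Phi x)| ≤ n * (|(n : ℝ) - 1| + 1) := by
  have hbracket : |phi x * ((n - 1) * phi x - x * Phi x)| ≤ |(n : ℝ) - 1| + 1 :=
    calc |phi x * ((n - 1) * phi x - x * Phi x)|
        = |(n - 1) * (phi x * phi x) - x * phi x * Phi x| := by ring_nf
      _ ≤ |(n - 1) * (phi x * phi x)| + |x * phi x * Phi x| := abs_sub _ _
      _ = |(n : ℝ) - 1| * (phi x * phi x) + |x| * phi x * Phi x := by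
        simp only [abs_mul, abs_of_nonneg (phi_nonneg x), abs_of_nonneg (Phi_nonneg x)]
      _ ≤ |(n : ℝ) - 1| * (1 * 1) + 1 * 1 := by
        gcongr
        exacts [phi_nonneg x, phi_le_one x, phi_le_one x, Phi_nonneg x, abs_mul_phi_le_one x,
          Phi_le_one x]
      _ = |(n : ℝ) - 1| + 1 := by ring
  rw [mul_assoc, abs_mul, abs_mul, Nat.abs_cast]
  calc n * |Phi x ^ (n - 2)| * |phi x * ((n - 1) * phi x - x * Phi x)|
      ≤ n * 1 * (|(n : ℝ) - 1| + 1) := by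
        gcongr
        exact abs_Phi_pow_le_one _ x
    _ = n * (|(n : ℝ) - 1| + 1) := by ring

end PhiPow

section CorrelationDerivatives

/-- The derivative `∂G/∂ρ`, that is `∂²d/∂ρ²`, written in terms of `G` as in the formula for the
second derivative of `H_n`. -/
noncomputable def derivG (ρ c z : ℝ) : ℝ :=
  G ρ c z * (4 * ρ - 1) / (2 * ρ * (1 - ρ)) + c / (4 * ρ * (1 - ρ) ^ ((3 : ℝ) / 2))

theorem rpow_three_div_two {x : ℝ} (hx : 0 ≤ x) : x ^ ((3 : ℝ) / 2) = x * √x := by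
  rw [show (3 : ℝ) / 2 = 1 + 1 / 2 by norm_num, Real.rpow_one_add' hx (by norm_num),
    Real.sqrt_eq_rpow]

variable {ρ : ℝ} (hρ : ρ ∈ Set.Ioo (0 : ℝ) 1) (c : ℝ)
include hρ

theorem hasDerivAt_dd (z : ℝ) : HasDerivAt (fun r => dd r c z) (G ρ c z) ρ := by
  have hρ₀ : 0 < ρ := hρ.1
  have hρ₁ : 0 < 1 - ρ := sub_pos.2 hρ.2
  refine ((((Real.hasDerivAt_sqrt hρ₀.ne').mul_const z).const_add c).div
    (((hasDerivAt_id ρ).const_sub 1).sqrt hρ₁.ne') (Real.sqrt_pos.2 hρ₁).ne').congr_deriv ?_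
  simp only [G, rpow_three_div_two hρ₁.le, id]
  have hs : √ρ ^ 2 = ρ := Real.sq_sqrt hρ₀.le
  have ht : √(1 - ρ) ^ 2 = 1 - ρ := Real.sq_sqrt hρ₁.le
  field_simp
  rw [ht]
  linear_combination (1 - ρ) * z * hs

theorem hasDerivAt_G (z : ℝ) : HasDerivAt (fun r => G r c z) (derivG ρ c z) ρ := by
  have hρ₀ : 0 < ρ := hρ.1
  have hρ₁ : 0 < 1 - ρ := sub_pos.2 hρ.2
  refine (((((Real.hasDerivAt_sqrt hρ₀.ne').fun_inv (Real.sqrt_pos.2 hρ₀).ne').const_mul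
    z).const_add c).div
    ((((hasDerivAt_id ρ).const_sub 1).rpow_const (p := 3 / 2) (.inl hρ₁.ne')).const_mul 2)
    (by positivity)).congr_deriv ?_
  simp only [derivG, G, rpow_three_div_two hρ₁.le, id, show (3 : ℝ) / 2 - 1 = 1 / 2 by norm_num,
    ← Real.sqrt_eq_rpow]
  field_simp
  rw [Real.sq_sqrt hρ₀.le]
  ring

theorem exists_eventually_abs_G_le : ∃ K, ∀ᶠ r in 𝓝 ρ, ∀ z, |G r c z| ≤ K * (1 + |z|) :=
  exists_eventually_abs_le_of_affine (fun r z => by unfold G; ring)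
    fun z => (hasDerivAt_G hρ c z).continuousAt

theorem exists_eventually_abs_derivG_le :
    ∃ K, ∀ᶠ r in 𝓝 ρ, ∀ z, |derivG r c z| ≤ K * (1 + |z|) := by
  refine exists_eventually_abs_le_of_affine (fun r z => by unfold derivG G; ring) fun z => ?_
  have hρ₀ : 0 < ρ := hρ.1
  have hρ₁ : 0 < 1 - ρ := sub_pos.2 hρ.2
  have hG : ContinuousAt (fun r => G r c z) ρ := (hasDerivAt_G hρ c z).continuousAt
  unfold derivG
  fun_prop (disch := positivity)

theorem hasDerivAt_deriv_integral_comp_dd {μ : Measure ℝ} [IsFiniteMeasure μ] (hμ : MemLp id 2 μ)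
    {f f' f'' : ℝ → ℝ} {K K' K'' : ℝ}
    (hf : ∀ x, HasDerivAt f (f' x) x) (hf' : ∀ x, HasDerivAt f' (f'' x) x)
    (hf''_cont : Continuous f'')
    (hf_le : ∀ x, |f x| ≤ K) (hf'_le : ∀ x, |f' x| ≤ K') (hf''_le : ∀ x, |f'' x| ≤ K'') :
    HasDerivAt (deriv fun r => ∫ z, f (dd r c z) ∂μ)
      (∫ z, (f'' (dd ρ c z) * G ρ c z ^ 2 + f' (dd ρ c z) * derivG ρ c z) ∂μ) ρ := by
  obtain ⟨L₁, hG_le⟩ := exists_eventually_abs_G_le hρ c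
  obtain ⟨L₂, hderivG_le⟩ := exists_eventually_abs_derivG_le hρ c
  have hlinear (L : ℝ) : MemLp (fun z => L * (1 + |z|)) 2 μ :=
    ((memLp_const (1 : ℝ)).add hμ.abs).const_mul L
  have hIoo : ∀ᶠ r in 𝓝 ρ, r ∈ Set.Ioo (0 : ℝ) 1 := Ioo_mem_nhds hρ.1 hρ.2
  have hdd_cont (r : ℝ) : Continuous (dd r c) := by unfold dd; fun_prop
  have hG_cont (r : ℝ) : Continuous (G r c) := by unfold G; fun_prop
  have hderivG_cont : Continuous (derivG ρ c) := by unfold derivG; fun_prop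
  exact hasDerivAt_deriv_integral_comp (u := fun r => dd r c) (u'' := fun r => derivG r c)
    hf hf' hf''_cont hf_le hf'_le hf''_le
    (fun r => (hdd_cont r).aestronglyMeasurable) (fun r => (hG_cont r).aestronglyMeasurable)
    hderivG_cont.aestronglyMeasurable
    (hIoo.mono fun r hr => hasDerivAt_dd hr c) (hIoo.mono fun r hr => hasDerivAt_G hr c)
    (hlinear L₁) hG_le ((hlinear L₂).integrable one_le_two) hderivG_le

end CorrelationDerivatives

theorem hasDerivAt_deriv_Hn (n : ℕ) (hn : 2 ≤ n) (c : ℝ) (ρ : ℝ) (hρ : ρ ∈ Set.Ioo (0:ℝ) 1) :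
    HasDerivAt (deriv (fun r => Hn n r c))
      (∫ z : ℝ, (n : ℝ) * (Phi (dd ρ c z)) ^ (n - 2) * phi (dd ρ c z) *
        ((((n : ℝ) - 1) * phi (dd ρ c z) - dd ρ c z * Phi (dd ρ c z)) * (G ρ c z) ^ 2
          + Phi (dd ρ c z) * G ρ c z * (4 * ρ - 1) / (2 * ρ * (1 - ρ))
          + c * Phi (dd ρ c z) / (4 * ρ * (1 - ρ) ^ ((3 : ℝ) / 2))) * phi z) ρ := by
  have hderiv := hasDerivAt_deriv_integral_comp_dd hρ c (memLp_id_gaussianReal (μ := 0) (v := 1) 2)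
    (hasDerivAt_Phi_pow n) (hasDerivAt_deriv_Phi_pow hn) (continuous_deriv_deriv_Phi_pow n)
    (abs_Phi_pow_le_one n) (abs_deriv_Phi_pow_le n) (abs_deriv_deriv_Phi_pow_le n)
  simp only [integral_gaussianReal_zero_one] at hderiv
  refine hderiv.congr_deriv (integral_congr_ae (.of_forall fun z => ?_))
  have hpow : Phi (dd ρ c z) ^ (n - 1) = Phi (dd ρ c z) ^ (n - 2) * Phi (dd ρ c z) := by
    rw [← pow_succ, show n - 2 + 1 = n - 1 by lia]
  simp only [derivG, hpow]
  ring
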